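/- Let G be a connected graph on n vertices with a JL-coloring φ (surjective, rainbow-cycle-free coloring with n-1 colors). Then (|E(G)| - (n-2)) ≤ |R(G,φ)| ≤ (|E(G)|/(n-1))^(n-1), where R(G,φ) is the set of rainbow spanning trees. -/

import Mathlib

/-- `T` is the edge set of a spanning tree of `G`: its edges lie in `G`, and the graph
formed by these edges is connected (hence spanning) and acyclic. -/
def IsSpanningTreeEdges {V : Type*} (G : SimpleGraph V) (T : Finset (Sym2 V)) : Prop :=
  ↑T ⊆ G.edgeSet ∧ (SimpleGraph.fromEdgeSet (↑T : Set (Sym2 V))).Connected ∧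
    (SimpleGraph.fromEdgeSet (↑T : Set (Sym2 V))).IsAcyclic

/-- An edge set is rainbow under a coloring `φ` if all its edges receive distinct colors. -/
def IsRainbow {V : Type*} {k : ℕ} (φ : Sym2 V → Fin k) (T : Finset (Sym2 V)) : Prop :=
  Set.InjOn φ ↑T

/-- `G` has a rainbow cycle under `φ`: a cycle whose edges receive pairwise distinct colors. -/
def HasRainbowCycle {V : Type*} {k : ℕ} (G : SimpleGraph V) (φ : Sym2 V → Fin k) : Prop :=
  ∃ (v : V) (c : G.Walk v v), c.IsCycle ∧ Set.InjOn φ {e | e ∈ c.edges}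

/-- `φ` is a JL-coloring of `G`: every one of the `k` colors appears on some edge of `G`
(surjectivity onto the colors) and there is no rainbow cycle. -/
def IsJLColoring {V : Type*} {k : ℕ} (G : SimpleGraph V) (φ : Sym2 V → Fin k) : Prop :=
  (∀ c : Fin k, ∃ e ∈ G.edgeSet, φ e = c) ∧ ¬ HasRainbowCycle G φ

/-- The number of rainbow spanning trees of `G` under the edge coloring `φ`. -/
noncomputable def numRST {V : Type*} {k : ℕ} (G : SimpleGraph V) (φ : Sym2 V → Fin k) : ℕ :=
  Nat.card {T : Finset (Sym2 V) // IsSpanningTreeEdges G T ∧ IsRainbow φ T}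

open Finset in
theorem jl_amgm (k : ℕ) (a : Fin k → ℕ) :
    (∏ i, (a i : ℝ)) ≤ ((∑ i, (a i : ℝ)) / k) ^ k := by
  rcases Nat.eq_zero_or_pos k with rfl | hk
  · simp
  have hk' : (k : ℝ) ≠ 0 := by positivity
  have h := Real.geom_mean_le_arith_mean_weighted (Finset.univ : Finset (Fin k))
    (fun _ => (k : ℝ)⁻¹) (fun i => (a i : ℝ)) (fun _ _ => by positivity)
    (by simp [hk']) (fun _ _ => by positivity)
  rw [Real.finsetProd_rpow _ _ (fun _ _ => by positivity), ← Finset.mul_sum] at h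
  have hp : (0 : ℝ) ≤ ∏ i, (a i : ℝ) := by positivity
  have h2 := pow_le_pow_left₀ (by positivity) h k
  rw [Real.rpow_inv_natCast_pow hp hk.ne'] at h2
  rwa [div_eq_inv_mul]

theorem jl_lower {ι : Type*} (s : Finset ι) (a : ι → ℕ) (ha : ∀ i, 1 ≤ a i) :
    (∑ i ∈ s, a i) + 1 ≤ (∏ i ∈ s, a i) + s.card := by
  classical
  induction s using Finset.induction_on with
  | empty => simp
  | insert i s hi ih =>
    rw [Finset.sum_insert hi, Finset.prod_insert hi, Finset.card_insert_of_notMem hi]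
    have h1 := ha i
    have h2 : 1 ≤ ∏ i ∈ s, a i := Finset.one_le_prod' (fun i _ => ha i)
    nlinarith [Nat.mul_le_mul h1 h2, mul_nonneg (Nat.zero_le (a i - 1)) (Nat.zero_le ((∏ i ∈ s, a i) - 1)),
      mul_nonneg (sub_nonneg.2 (Int.ofNat_le.2 h1)) (sub_nonneg.2 (Int.ofNat_le.2 h2))]

theorem jl_edgeSet {V : Type*} (G : SimpleGraph V) (T : Finset (Sym2 V))
    (hT : (T : Set (Sym2 V)) ⊆ G.edgeSet) :
    (SimpleGraph.fromEdgeSet (T : Set (Sym2 V))).edgeSet = T := by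
  rw [SimpleGraph.edgeSet_fromEdgeSet]
  refine sdiff_eq_left.2 ?_
  rw [Set.disjoint_left]
  intro e he hd
  exact G.not_isDiag_of_mem_edgeSet (hT he) (by simpa using hd)

theorem jl_tree {V : Type*} [Fintype V] [DecidableEq V] (G : SimpleGraph V)
    (hG : G.Connected) {k : ℕ} (hk : k = Fintype.card V - 1)
    (φ : Sym2 V → Fin k) (hφ : ¬ HasRainbowCycle G φ) (T : Finset (Sym2 V))
    (hT : (T : Set (Sym2 V)) ⊆ G.edgeSet) (hr : IsRainbow φ T) (hc : T.card = k) :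
    IsSpanningTreeEdges G T := by
  have hes := jl_edgeSet G T hT
  have hle : SimpleGraph.fromEdgeSet (T : Set (Sym2 V)) ≤ G := by
    rw [← SimpleGraph.edgeSet_subset_edgeSet, hes]; exact hT
  have hac : (SimpleGraph.fromEdgeSet (T : Set (Sym2 V))).IsAcyclic := by
    intro v c hcyc
    refine hφ ⟨v, c.mapLe hle, hcyc.mapLe hle, ?_⟩
    refine Set.InjOn.mono ?_ hr
    intro e he
    simp only [Set.mem_ofPred_eq, SimpleGraph.Walk.edges_mapLe_eq_edges] at he
    rw [← hes]
    exact c.edges_subset_edgeSet he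
  obtain ⟨F, hF1, hF2, hF3⟩ := hG.exists_isTree_le_of_le_of_isAcyclic hle hac
  classical
  have hcard := hF3.card_edgeFinset
  have hsub : T ⊆ F.edgeFinset := by
    intro e he
    rw [SimpleGraph.mem_edgeFinset]
    apply SimpleGraph.edgeSet_subset_edgeSet.2 hF1
    rw [hes]; exact he
  have heq : T = F.edgeFinset := Finset.eq_of_subset_of_card_le hsub (by omega)
  have : SimpleGraph.fromEdgeSet (T : Set (Sym2 V)) = F := by
    rw [heq]; simp
  exact ⟨hT, this ▸ hF3.connected, hac⟩

theorem jl_count {V : Type*} [Fintype V] [DecidableEq V] (G : SimpleGraph V)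
    [DecidableRel G.Adj] (hG : G.Connected) {k : ℕ} (hk : k = Fintype.card V - 1)
    (φ : Sym2 V → Fin k) (hφ : ¬ HasRainbowCycle G φ) :
    numRST G φ = ∏ c, (G.edgeFinset.filter (fun e => φ e = c)).card := by
  have key : ∀ f : (∀ c : Fin k, {e // e ∈ G.edgeFinset.filter (fun e => φ e = c)}),
      ∀ c, φ (f c).1 = c := fun f c => (Finset.mem_filter.1 (f c).2).2
  have keyE : ∀ f : (∀ c : Fin k, {e // e ∈ G.edgeFinset.filter (fun e => φ e = c)}),
      ∀ c, (f c).1 ∈ G.edgeSet := fun f c => by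
    simpa using (Finset.mem_filter.1 (f c).2).1
  have hr : ∀ f : (∀ c : Fin k, {e // e ∈ G.edgeFinset.filter (fun e => φ e = c)}),
      IsRainbow φ (Finset.univ.image (fun c => (f c).1)) := by
    intro f x hx y hy hxy
    simp only [Finset.coe_image, Finset.coe_univ, Set.image_univ, Set.mem_range] at hx hy
    obtain ⟨c, rfl⟩ := hx
    obtain ⟨d, rfl⟩ := hy
    rw [key, key] at hxy
    rw [hxy]
  let F : (∀ c : Fin k, {e // e ∈ G.edgeFinset.filter (fun e => φ e = c)}) →
      {T : Finset (Sym2 V) // IsSpanningTreeEdges G T ∧ IsRainbow φ T} := fun f =>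
    ⟨Finset.univ.image (fun c => (f c).1), by
      refine ⟨jl_tree G hG hk φ hφ _ ?_ (hr f) ?_, hr f⟩
      · intro e he
        simp only [Finset.coe_image, Finset.coe_univ, Set.image_univ, Set.mem_range] at he
        obtain ⟨c, rfl⟩ := he
        exact keyE f c
      · rw [Finset.card_image_of_injective]
        · simp
        · intro c d hcd
          have := congrArg φ hcd
          simpa only [key] using this⟩
  have hF : Function.Bijective F := by
    constructor
    · intro f g hfg
      have h1 : Finset.univ.image (fun c => (f c).1) = Finset.univ.image (fun c => (g c).1) :=
        congrArg Subtype.val hfg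
      funext c
      apply Subtype.ext
      have : (f c).1 ∈ Finset.univ.image (fun c => (g c).1) := by
        rw [← h1]; exact Finset.mem_image_of_mem _ (Finset.mem_univ c)
      obtain ⟨d, -, hd⟩ := Finset.mem_image.1 this
      have h2 := congrArg φ hd
      rw [key, key] at h2
      subst h2
      exact hd.symm
    · rintro ⟨T, ⟨hT, hTc, hTa⟩, hTr⟩
      have hcT : T.card = k := by
        have h := (SimpleGraph.IsTree.mk hTc hTa)
        have h2 := (SimpleGraph.isTree_iff_connected_and_card.1 h).2
        rw [jl_edgeSet G T hT] at h2
        simp at h2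
        omega
      have himg : T.image φ = Finset.univ := by
        rw [← Finset.card_eq_iff_eq_univ, Finset.card_image_of_injOn hTr, hcT]
        simp
      have hex : ∀ c, ∃ e ∈ T, φ e = c := fun c => by
        have : c ∈ T.image φ := by rw [himg]; simp
        simpa using this
      choose f hf1 hf2 using hex
      refine ⟨fun c => ⟨f c, by simpa [hf2] using hT (hf1 c)⟩, ?_⟩
      apply Subtype.ext
      change Finset.univ.image f = T
      ext e
      simp only [Finset.mem_image, Finset.mem_univ, true_and]
      constructor
      · rintro ⟨c, rfl⟩; exact hf1 c
      · intro he
        exact ⟨φ e, hTr (hf1 _) he (hf2 _)⟩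
  rw [numRST, ← Nat.card_congr (Equiv.ofBijective F hF), Nat.card_pi]
  refine Finset.prod_congr rfl fun c _ => ?_
  rw [Nat.card_eq_fintype_card, Fintype.card_coe]

/-- For a JL-coloring `φ` of a connected graph `G` on `n` vertices,
`|E(G)| - (n - 2) ≤ |R(G,φ)| ≤ (|E(G)|/(n-1))^(n-1)`. -/
theorem stmt_14 {V : Type*} [Fintype V] [DecidableEq V] (G : SimpleGraph V)
    [DecidableRel G.Adj] (hG : G.Connected)
    (φ : Sym2 V → Fin (Fintype.card V - 1)) (hφ : IsJLColoring G φ) :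
    (G.edgeFinset.card : ℝ) - ((Fintype.card V : ℝ) - 2) ≤ (numRST G φ : ℝ) ∧
      (numRST G φ : ℝ) ≤
        ((G.edgeFinset.card : ℝ) / ((Fintype.card V : ℝ) - 1)) ^ (Fintype.card V - 1) := by
  have hcount := jl_count G hG rfl φ hφ.2
  have hne : Nonempty V := hG.nonempty
  have hpos : 1 ≤ Fintype.card V := Fintype.card_pos
  have hcast : ((Fintype.card V - 1 : ℕ) : ℝ) = (Fintype.card V : ℝ) - 1 := by
    push_cast [hpos]; ring
  have hsum : ∑ c, (G.edgeFinset.filter (fun e => φ e = c)).card = G.edgeFinset.card :=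
    (Finset.card_eq_sum_card_fiberwise (fun _ _ => Finset.mem_coe.2 (Finset.mem_univ _))).symm
  constructor
  · have h := jl_lower Finset.univ
      (fun c => (G.edgeFinset.filter (fun e => φ e = c)).card) (fun c => by
        obtain ⟨e, he, hec⟩ := hφ.1 c
        exact Finset.card_pos.2 ⟨e, by simpa [hec] using he⟩)
    rw [hsum, ← hcount, Finset.card_univ, Fintype.card_fin] at h
    have h' : (G.edgeFinset.card : ℝ) + 1 ≤ numRST G φ + ((Fintype.card V - 1 : ℕ) : ℝ) := by
      exact_mod_cast h
    rw [hcast] at h'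
    linarith
  · have h := jl_amgm _ (fun c => (G.edgeFinset.filter (fun e => φ e = c)).card)
    rw [← Nat.cast_prod, ← Nat.cast_sum, hsum, ← hcount, hcast] at h
    exact h
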